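/- arXiv:2507.10166 — 3 statements merged into one kernel-verified Lean document; each statement's English description precedes it below -/
import Mathlib

section
/- Let A ∈ ℝ^{n×n}, B ∈ ℝ^{n×m}, K ∈ ℝ^{m×n}, g : ℝⁿ → ℝⁿ, and let E^P, W^P, X ⊆ ℝⁿ and V ⊆ ℝᵐ be sets. Let z^P, x^P : ℕ → ℝⁿ and v^P : ℕ → ℝᵐ satisfy the Parent nominal dynamics z^P_{i+1} = A z^P_i + B v^P_i, the Parent actual dynamics x^P_{i+1} = A x^P_i + B u^P_i + g(x^P_i) with the ancillary law u^P_i = v^P_i + K(x^P_i − z^P_i), and the input constraint v^P_i ∈ V ⊖ (K '' E^P). Assume: (i) E^P is robustly positively invariant for the error dynamics, i.e. for all e ∈ E^P and w ∈ W^P, (A + B K) e + w ∈ E^P; (ii) x^P_i ∈ X for all i and g maps X into W^P; (iii) x^P_0 − z^P_0 ∈ E^P. Then the warm start z^C_i := x^P_i, v^C_i := u^P_i satisfies, for every i: (a) z^C_{i+1} = A z^C_i + g(z^C_i) + B v^C_i (the Child nominal dynamics constraint); (b) z^C_i ∈ {z^P_i} ⊕ E^P (the stage-wise tube constraint); and (c)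 v^C_i ∈ V (the input admissibility constraint). (Theorem 2: feasibility of the P-MPC-based warm start for nominal C-MPC.) -/
open Matrix Pointwise

/-- The Pontryagin (erosion) difference of sets: `A ⊖ B = {x : ∀ b ∈ B, x + b ∈ A}`. -/
def pontryaginDiff {α : Type*} [Add α] (A B : Set α) : Set α :=
  {x | ∀ b ∈ B, x + b ∈ A}

/-- **Theorem 2 (Feasibility of the P-MPC-based warm start for nominal C-MPC).**
Under the Parent nominal dynamics, the Parent actual dynamics with ancillary law
`uP i = vP i + K (xP i - zP i)`, the tightened input constraint
`vP i ∈ V ⊖ (K '' EP)`, robust positive invariance of `EP` for the error dynamics,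
`xP i ∈ X` with `g '' X ⊆ WP`, and `xP 0 - zP 0 ∈ EP`, the warm start
`zC := xP`, `vC := uP` satisfies the Child nominal dynamics, the stage-wise tube
constraint `zC i ∈ {zP i} ⊕ EP`, and the input admissibility `vC i ∈ V`. -/
theorem stmt_1 {n m : ℕ}
    (A : Matrix (Fin n) (Fin n) ℝ) (B : Matrix (Fin n) (Fin m) ℝ)
    (K : Matrix (Fin m) (Fin n) ℝ) (g : (Fin n → ℝ) → (Fin n → ℝ))
    (EP WP X : Set (Fin n → ℝ)) (V : Set (Fin m → ℝ))
    (zP xP : ℕ → Fin n → ℝ) (vP uP : ℕ → Fin m → ℝ)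
    (hnom : ∀ i, zP (i + 1) = A.mulVec (zP i) + B.mulVec (vP i))
    (hanc : ∀ i, uP i = vP i + K.mulVec (xP i - zP i))
    (hact : ∀ i, xP (i + 1) = A.mulVec (xP i) + B.mulVec (uP i) + g (xP i))
    (hinput : ∀ i, vP i ∈ pontryaginDiff V (K.mulVec '' EP))
    (hRPI : ∀ e ∈ EP, ∀ w ∈ WP, (A + B * K).mulVec e + w ∈ EP)
    (hX : ∀ i, xP i ∈ X) (hg : ∀ x ∈ X, g x ∈ WP)
    (h0 : xP 0 - zP 0 ∈ EP) :
    ∀ i,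
      (xP (i + 1) = A.mulVec (xP i) + g (xP i) + B.mulVec (uP i)) ∧
      (xP i ∈ ({zP i} : Set (Fin n → ℝ)) + EP) ∧
      (uP i ∈ V) := by
  have he : ∀ i, xP i - zP i ∈ EP := by
    intro i
    induction i with
    | zero => exact h0
    | succ i ih =>
      have h := hRPI _ ih _ (hg _ (hX i))
      have heq : xP (i + 1) - zP (i + 1) =
          (A + B * K).mulVec (xP i - zP i) + g (xP i) := by
        rw [hact, hnom, hanc, Matrix.add_mulVec, ← Matrix.mulVec_mulVec,
          Matrix.mulVec_add, Matrix.mulVec_sub A]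
        abel
      rw [heq]
      exact h
  intro i
  refine ⟨?_, ?_, ?_⟩
  · rw [hact]
    abel
  · exact Set.mem_add.mpr ⟨zP i, rfl, xP i - zP i, he i, by abel⟩
  · rw [hanc]
    exact hinput i _ ⟨_, he i, rfl⟩
end

section
/- Consider the disturbed nonlinear system x_{k+1} = A x_k + g(x_k) + B u_k + w_k and its nominal model z_{k+1} = A z_k + g(z_k) + B v_k, controlled by the ancillary law u_k = v_k + K(x_k − z_k), where A ∈ ℝ^{n×n}, B ∈ ℝ^{n×m}, K ∈ ℝ^{m×n}, g : ℝⁿ → ℝⁿ is Lipschitz with constant L ≥ 0, and ‖w_k‖ ≤ w̄ for all k. Let ρ := ‖A + B K‖ + L (operator norm) and assume ρ < 1, and set r := w̄ / (1 − ρ). If ‖x_0 − z_0‖ ≤ r, then ‖x_k − z_k‖ ≤ r for every k ∈ ℕ; that is, the closed ball of radius r around the nominal trajectory is a robust positive invariant tube. -/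
/-- For the disturbed nonlinear system `x_{k+1} = A x_k + g(x_k) + B u_k + w_k` with
nominal model `z_{k+1} = A z_k + g(z_k) + B v_k` and ancillary law
`u_k = v_k + K (x_k - z_k)`, where `g` is `L`-Lipschitz and `‖w_k‖ ≤ w̄`, if
`ρ = ‖A + B K‖ + L < 1` and `r = w̄ / (1 - ρ)`, then `‖x_0 - z_0‖ ≤ r` implies
`‖x_k - z_k‖ ≤ r` for all `k`: the closed ball of radius `r` around the nominal
trajectory is a robust positive invariant tube. -/
theorem stmt_3 {n m : ℕ}
    (A : EuclideanSpace ℝ (Fin n) →L[ℝ] EuclideanSpace ℝ (Fin n))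
    (B : EuclideanSpace ℝ (Fin m) →L[ℝ] EuclideanSpace ℝ (Fin n))
    (K : EuclideanSpace ℝ (Fin n) →L[ℝ] EuclideanSpace ℝ (Fin m))
    (g : EuclideanSpace ℝ (Fin n) → EuclideanSpace ℝ (Fin n))
    (L : ℝ) (hL : 0 ≤ L)
    (hLip : ∀ x₁ x₂, ‖g x₁ - g x₂‖ ≤ L * ‖x₁ - x₂‖)
    (x z : ℕ → EuclideanSpace ℝ (Fin n))
    (v : ℕ → EuclideanSpace ℝ (Fin m))
    (w : ℕ → EuclideanSpace ℝ (Fin n))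
    (wbar : ℝ) (hw : ∀ k, ‖w k‖ ≤ wbar)
    (hx : ∀ k, x (k + 1) = A (x k) + g (x k) + B (v k + K (x k - z k)) + w k)
    (hz : ∀ k, z (k + 1) = A (z k) + g (z k) + B (v k))
    (ρ r : ℝ) (hρdef : ρ = ‖A + B.comp K‖ + L) (hρ : ρ < 1)
    (hr : r = wbar / (1 - ρ))
    (h0 : ‖x 0 - z 0‖ ≤ r) :
    ∀ k, ‖x k - z k‖ ≤ r := by
  intro k
  have hrw : ρ * r + wbar = r := by
    have h : (1 - ρ) ≠ 0 := by linarith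
    have h2 : r * (1 - ρ) = wbar := by rw [hr]; field_simp
    linarith
  have hρ0 : 0 ≤ ρ := by rw [hρdef]; positivity
  induction k with
  | zero => exact h0
  | succ k ih =>
    have e : x (k + 1) - z (k + 1)
        = (A + B.comp K) (x k - z k) + (g (x k) - g (z k)) + w k := by
      rw [hx, hz]
      simp only [map_add, map_sub, ContinuousLinearMap.add_apply, ContinuousLinearMap.comp_apply]
      abel
    have h1 := norm_add₃_le (a := (A + B.comp K) (x k - z k)) (b := g (x k) - g (z k)) (c := w k)
    have h2 := (A + B.comp K).le_opNorm (x k - z k)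
    have h3 := hLip (x k) (z k)
    have h4 := hw k
    have h5 : ρ * ‖x k - z k‖ ≤ ρ * r := mul_le_mul_of_nonneg_left ih hρ0
    have h6 : ρ * ‖x k - z k‖ = ‖A + B.comp K‖ * ‖x k - z k‖ + L * ‖x k - z k‖ := by
      rw [hρdef]; ring
    rw [e]
    linarith
end

section
/- Consider the disturbed nonlinear system x_{k+1} = A x_k + g(x_k) + B u_k + w_k and its nominal model z_{k+1} = A z_k + g(z_k) + B v_k, controlled by the ancillary law u_k = v_k + K(x_k − z_k), where g : ℝⁿ → ℝⁿ is Lipschitz with constant L ≥ 0 and ‖w_k‖ ≤ w̄ for all k. Let ρ := ‖A + B K‖ + L (operator norm) and assume ρ < 1. Then for every k ∈ ℕ, ‖x_k − z_k‖ ≤ ρ^k ‖x_0 − z_0‖ + w̄ / (1 − ρ); in particular the tracking error converges exponentially to the ball of radius w̄/(1−ρ). -/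
/-- For the disturbed nonlinear system `x_{k+1} = A x_k + g(x_k) + B u_k + w_k` with
nominal model `z_{k+1} = A z_k + g(z_k) + B v_k` and ancillary law
`u_k = v_k + K (x_k - z_k)`, where `g` is `L`-Lipschitz and `‖w_k‖ ≤ w̄`, if
`ρ = ‖A + B K‖ + L < 1`, then `‖x_k - z_k‖ ≤ ρ^k ‖x_0 - z_0‖ + w̄ / (1 - ρ)` for all
`k`: the tracking error converges exponentially to the ball of radius `w̄ / (1 - ρ)`. -/
theorem stmt_4 {n m : ℕ}
    (A : EuclideanSpace ℝ (Fin n) →L[ℝ] EuclideanSpace ℝ (Fin n))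
    (B : EuclideanSpace ℝ (Fin m) →L[ℝ] EuclideanSpace ℝ (Fin n))
    (K : EuclideanSpace ℝ (Fin n) →L[ℝ] EuclideanSpace ℝ (Fin m))
    (g : EuclideanSpace ℝ (Fin n) → EuclideanSpace ℝ (Fin n))
    (L : ℝ) (hL : 0 ≤ L)
    (hLip : ∀ x₁ x₂, ‖g x₁ - g x₂‖ ≤ L * ‖x₁ - x₂‖)
    (x z : ℕ → EuclideanSpace ℝ (Fin n))
    (v : ℕ → EuclideanSpace ℝ (Fin m))
    (w : ℕ → EuclideanSpace ℝ (Fin n))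
    (wbar : ℝ) (hw : ∀ k, ‖w k‖ ≤ wbar)
    (hx : ∀ k, x (k + 1) = A (x k) + g (x k) + B (v k + K (x k - z k)) + w k)
    (hz : ∀ k, z (k + 1) = A (z k) + g (z k) + B (v k))
    (ρ : ℝ) (hρdef : ρ = ‖A + B.comp K‖ + L) (hρ : ρ < 1) :
    ∀ k, ‖x k - z k‖ ≤ ρ ^ k * ‖x 0 - z 0‖ + wbar / (1 - ρ) := by
  have hρ0 : 0 ≤ ρ := by rw [hρdef]; positivity
  have hw0 : 0 ≤ wbar := (norm_nonneg _).trans (hw 0)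
  have h1 : 0 < 1 - ρ := by linarith
  intro k
  induction k with
  | zero =>
    have : 0 ≤ wbar / (1 - ρ) := by positivity
    simpa using this
  | succ k ih =>
    have e : x (k + 1) - z (k + 1)
        = (A + B.comp K) (x k - z k) + (g (x k) - g (z k)) + w k := by
      rw [hx, hz]
      simp only [ContinuousLinearMap.add_apply, ContinuousLinearMap.comp_apply, map_add, map_sub]
      abel
    have step : ‖x (k + 1) - z (k + 1)‖ ≤ ρ * ‖x k - z k‖ + wbar := by
      rw [e]
      have a1 := norm_add₃_le (a := (A + B.comp K) (x k - z k)) (b := g (x k) - g (z k)) (c := w k)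
      have a2 := (A + B.comp K).le_opNorm (x k - z k)
      have a3 := hLip (x k) (z k)
      have a4 := hw k
      rw [hρdef, add_mul]
      linarith
    have hm := mul_le_mul_of_nonneg_left ih hρ0
    have e2 : ρ * (wbar / (1 - ρ)) + wbar = wbar / (1 - ρ) := by
      field_simp
      ring
    rw [pow_succ]
    nlinarith
end
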